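/- arXiv:2205.14208 — 10 statements merged into one kernel-verified Lean document; each statement's English description precedes it below -/
import Mathlib

section
/- (Theorem 2.1, TAD acquisition function.) The expectation of the predictive log-likelihood L_P of the target under the data-predictive moments has the closed form: ∫ L_P(g₂) dν(g₂) = −(1/2)·log det Q^{(f|1+2)} − (1/2)·(f_T − p^{(f|1)})ᵀ (Q^{(f|1+2)})⁻¹ (f_T − p^{(f|1)}) − (1/2)·Trace( A (Q^{(2|1)})⁻¹ Aᵀ (Q^{(f|1+2)})⁻¹ ), where A := K_x2 − K_x1 (K_11+Σ_1)⁻¹ K_12. -/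
open Matrix MeasureTheory

/-- Theorem 2.1 (TAD acquisition function): the expectation of the predictive
log-likelihood of the target under the data-predictive moments has the closed form
`∫ L_P dν = −(1/2)·log det Q^{(f|1+2)} − (1/2)·(f_T − p^{(f|1)})ᵀ(Q^{(f|1+2)})⁻¹(f_T − p^{(f|1)})
 − (1/2)·Tr(A (Q^{(2|1)})⁻¹ Aᵀ (Q^{(f|1+2)})⁻¹)`, with `A := K_x2 − K_x1(K_11+Σ_1)⁻¹K_12`. -/
theorem TAD_acquisition_function
    {a b c : Type*} [Fintype a] [Fintype b] [Fintype c]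
    [DecidableEq a] [DecidableEq b] [DecidableEq c]
    [Nonempty a] [Nonempty b] [Nonempty c]
    (Kxx : Matrix a a ℝ) (Kx1 : Matrix a b ℝ) (Kx2 : Matrix a c ℝ)
    (K11 : Matrix b b ℝ) (K12 : Matrix b c ℝ) (K22 : Matrix c c ℝ)
    (S1 : Matrix b b ℝ) (S2 : Matrix c c ℝ)
    (h1 : IsUnit (K11 + S1))
    (Q21 : Matrix c c ℝ)
    (hQ21 : Q21 = K22 + S2 - K12ᵀ * (K11 + S1)⁻¹ * K12)
    (h2 : IsUnit Q21)
    (Γ : Matrix (b ⊕ c) (b ⊕ c) ℝ)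
    (hΓ : Γ = fromBlocks (K11 + S1) K12 K12ᵀ (K22 + S2))
    (μx : a → ℝ) (μ1 : b → ℝ) (μ2 : c → ℝ) (g1 : b → ℝ) (fT : a → ℝ)
    (pf1 : a → ℝ)
    (hpf1 : pf1 = μx + (Kx1 * (K11 + S1)⁻¹).mulVec (g1 - μ1))
    (p21 : c → ℝ)
    (hp21 : p21 = μ2 + (K12ᵀ * (K11 + S1)⁻¹).mulVec (g1 - μ1))
    (pf12 : (c → ℝ) → (a → ℝ))
    (hpf12 : ∀ g2, pf12 g2
      = μx + (fromCols Kx1 Kx2 * Γ⁻¹).mulVec (Sum.elim (g1 - μ1) (g2 - μ2)))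
    (Qf12 : Matrix a a ℝ)
    (hQf12 : Qf12 = Kxx - fromCols Kx1 Kx2 * Γ⁻¹ * fromRows Kx1ᵀ Kx2ᵀ)
    (hQf12pd : Qf12.PosDef)
    (LP : (c → ℝ) → ℝ)
    (hLP : ∀ g2, LP g2
      = -(1/2) * Real.log Qf12.det
        - (1/2) * ((fT - pf12 g2) ⬝ᵥ (Qf12⁻¹).mulVec (fT - pf12 g2)))
    (A : Matrix a c ℝ)
    (hA : A = Kx2 - Kx1 * (K11 + S1)⁻¹ * K12)
    (ν : Measure (c → ℝ)) [IsProbabilityMeasure ν]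
    (hint1 : ∀ i, Integrable (fun g2 => g2 i) ν)
    (hint2 : ∀ i j, Integrable (fun g2 => g2 i * g2 j) ν)
    (hmean : ∀ i, ∫ g2, g2 i ∂ν = p21 i)
    (hcov : ∀ i j, ∫ g2, (g2 i - p21 i) * (g2 j - p21 j) ∂ν = Q21 i j) :
    ∫ g2, LP g2 ∂ν
      = -(1/2) * Real.log Qf12.det
        - (1/2) * ((fT - pf1) ⬝ᵥ (Qf12⁻¹).mulVec (fT - pf1))
        - (1/2) * (A * Q21⁻¹ * Aᵀ * Qf12⁻¹).trace := by
  have hM : (K11 + S1)⁻¹ * (K11 + S1) = 1 :=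
    nonsing_inv_mul _ ((isUnit_iff_isUnit_det _).1 h1)
  have hQ : Q21⁻¹ * Q21 = 1 := nonsing_inv_mul _ ((isUnit_iff_isUnit_det _).1 h2)
  have hQ' : Q21 * Q21⁻¹ = 1 := mul_nonsing_inv _ ((isUnit_iff_isUnit_det _).1 h2)
  have hsym : Q21ᵀ = Q21 := by
    ext i j
    rw [transpose_apply, ← hcov, ← hcov]
    simp only [mul_comm]
  have hΓu : IsUnit Γ.det := by
    let := h1.invertible
    rw [hΓ, det_fromBlocks₁₁, invOf_eq_nonsing_inv, ← hQ21]
    exact ((isUnit_iff_isUnit_det _).1 h1).mul ((isUnit_iff_isUnit_det _).1 h2)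
  obtain ⟨Y, hY⟩ : ∃ Y, Y = A * Q21⁻¹ := ⟨_, rfl⟩
  have hYQ : Y * Q21 = A := by rw [hY, Matrix.mul_assoc, hQ, Matrix.mul_one]
  have hrow : fromCols Kx1 Kx2 * Γ⁻¹
      = fromCols ((Kx1 - Y * K12ᵀ) * (K11 + S1)⁻¹) Y := by
    have : fromCols Kx1 Kx2 = fromCols ((Kx1 - Y * K12ᵀ) * (K11 + S1)⁻¹) Y * Γ := by
      rw [hΓ, fromCols_mul_fromBlocks]
      have e1 : (Kx1 - Y * K12ᵀ) * (K11 + S1)⁻¹ * (K11 + S1) + Y * K12ᵀ = Kx1 := by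
        rw [Matrix.mul_assoc, hM, Matrix.mul_one, sub_add_cancel]
      have e2 : (Kx1 - Y * K12ᵀ) * (K11 + S1)⁻¹ * K12 + Y * (K22 + S2) = Kx2 := by
        have h3 : K22 + S2 = Q21 + K12ᵀ * (K11 + S1)⁻¹ * K12 := by rw [hQ21]; abel
        rw [h3, Matrix.mul_add, hYQ, hA]
        simp only [Matrix.sub_mul, Matrix.mul_assoc]
        abel
      rw [e1, e2]
    rw [this, Matrix.mul_assoc, mul_nonsing_inv _ hΓu, Matrix.mul_one]
  have hp : ∀ g2, fT - pf12 g2 = (fT - pf1) - Y *ᵥ (g2 - p21) := by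
    intro g2
    rw [hpf12, hrow, fromCols_mulVec_sumElim, hpf1, hp21]
    simp only [Matrix.sub_mul, Matrix.sub_mulVec, Matrix.mulVec_sub, Matrix.mulVec_add,
      ← Matrix.mulVec_mulVec]
    abel
  obtain ⟨e, he⟩ : ∃ e, e = fT - pf1 := ⟨_, rfl⟩
  obtain ⟨P, hP⟩ : ∃ P, P = Qf12⁻¹ := ⟨_, rfl⟩
  have hL : ∀ g2, LP g2 = (-(1/2) * Real.log Qf12.det - (1/2) * (e ⬝ᵥ P *ᵥ e))
      + (∑ i, ((1/2) * ((e ᵥ* P) ᵥ* Y + (P *ᵥ e) ᵥ* Y) i) * (g2 i - p21 i)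
      - ∑ i, ∑ j, ((1/2) * (Yᵀ * P * Y) i j) * ((g2 i - p21 i) * (g2 j - p21 j))) := by
    intro g2
    rw [hLP, hp, ← he, ← hP]
    obtain ⟨d, hd⟩ : ∃ d, d = g2 - p21 := ⟨_, rfl⟩
    have hd' : ∀ i, g2 i - p21 i = d i := fun i => by rw [hd]; rfl
    simp only [hd', ← hd]
    have q1 : ∑ i, ((1/2) * ((e ᵥ* P) ᵥ* Y + (P *ᵥ e) ᵥ* Y) i) * d i
        = (1/2) * (((e ᵥ* P) ᵥ* Y) ⬝ᵥ d + ((P *ᵥ e) ᵥ* Y) ⬝ᵥ d) := by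
      rw [← add_dotProduct, dotProduct, Finset.mul_sum]
      exact Finset.sum_congr rfl fun i _ => by ring
    have q2 : ∑ i, ∑ j, ((1/2) * (Yᵀ * P * Y) i j) * (d i * d j)
        = (1/2) * (d ⬝ᵥ (Yᵀ * P * Y) *ᵥ d) := by
      simp only [dotProduct, mulVec, Finset.mul_sum]
      exact Finset.sum_congr rfl fun i _ => Finset.sum_congr rfl fun j _ => by ring
    have q3 : d ⬝ᵥ (Yᵀ * P * Y) *ᵥ d = (Y *ᵥ d) ⬝ᵥ P *ᵥ (Y *ᵥ d) := by
      rw [← mulVec_mulVec, ← mulVec_mulVec, dotProduct_mulVec, vecMul_transpose]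
    have q4 : ((P *ᵥ e) ᵥ* Y) ⬝ᵥ d = (Y *ᵥ d) ⬝ᵥ P *ᵥ e := by
      rw [← dotProduct_mulVec, dotProduct_comm]
    have q5 : ((e ᵥ* P) ᵥ* Y) ⬝ᵥ d = e ⬝ᵥ P *ᵥ (Y *ᵥ d) := by
      rw [← dotProduct_mulVec, ← dotProduct_mulVec]
    rw [q1, q2, q3, q4, q5]
    simp only [mulVec_sub, sub_dotProduct, dotProduct_sub]
    ring
  have i1 : ∀ i, Integrable (fun g2 : c → ℝ => g2 i - p21 i) ν :=
    fun i => (hint1 i).sub (integrable_const _)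
  have i2 : ∀ i j, Integrable (fun g2 : c → ℝ => (g2 i - p21 i) * (g2 j - p21 j)) ν := by
    intro i j
    have := (((hint2 i j).sub ((hint1 i).mul_const (p21 j))).sub
      ((hint1 j).const_mul (p21 i))).add (integrable_const (μ := ν) (p21 i * p21 j))
    refine this.congr (Filter.Eventually.of_forall fun g => ?_)
    simp only [Pi.add_apply, Pi.sub_apply]
    ring
  have m1 : ∀ i, ∫ g2, (g2 i - p21 i) ∂ν = 0 := by
    intro i
    rw [integral_sub (hint1 i) (integrable_const _), hmean]
    simp
  have I1 : Integrable (fun g2 : c → ℝ =>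
      ∑ i, ((1/2) * ((e ᵥ* P) ᵥ* Y + (P *ᵥ e) ᵥ* Y) i) * (g2 i - p21 i)) ν :=
    integrable_finsetSum _ fun i _ => (i1 i).const_mul _
  have I2' : ∀ i, Integrable (fun g2 : c → ℝ =>
      ∑ j, ((1/2) * (Yᵀ * P * Y) i j) * ((g2 i - p21 i) * (g2 j - p21 j))) ν := fun i =>
    integrable_finsetSum _ fun j _ => (i2 i j).const_mul _
  have I2 : Integrable (fun g2 : c → ℝ =>
      ∑ i, ∑ j, ((1/2) * (Yᵀ * P * Y) i j) * ((g2 i - p21 i) * (g2 j - p21 j))) ν :=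
    integrable_finsetSum _ fun i _ => I2' i
  have I3 : Integrable (fun g2 : c → ℝ =>
      ∑ i, ((1/2) * ((e ᵥ* P) ᵥ* Y + (P *ᵥ e) ᵥ* Y) i) * (g2 i - p21 i)
      - ∑ i, ∑ j, ((1/2) * (Yᵀ * P * Y) i j) * ((g2 i - p21 i) * (g2 j - p21 j))) ν :=
    I1.sub I2
  simp only [hL]
  rw [integral_add (integrable_const _) I3, integral_sub I1 I2,
    integral_finsetSum _ (fun i _ => (i1 i).const_mul _),
    integral_finsetSum _ (fun i _ => I2' i)]
  have J : ∀ i, ∫ g2 : c → ℝ,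
      ∑ j, ((1/2) * (Yᵀ * P * Y) i j) * ((g2 i - p21 i) * (g2 j - p21 j)) ∂ν
      = ∑ j, (1/2) * ((Yᵀ * P * Y) i j * Q21 j i) := by
    intro i
    rw [integral_finsetSum _ (fun j _ => (i2 i j).const_mul _)]
    refine Finset.sum_congr rfl fun j _ => ?_
    rw [integral_const_mul, hcov, ← transpose_apply Q21, hsym, mul_assoc]
  have T : ∑ i, ∑ j, (1/2) * ((Yᵀ * P * Y) i j * Q21 j i)
      = (1/2) * (A * Q21⁻¹ * Aᵀ * P).trace := by
    have t1 : A * Q21⁻¹ * Aᵀ * P = Y * Q21 * Yᵀ * P := by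
      rw [hYQ, hY, transpose_mul, transpose_nonsing_inv, hsym, Matrix.mul_assoc A]
    have t2 : (Y * Q21 * Yᵀ * P).trace = (Yᵀ * P * Y * Q21).trace := by
      rw [Matrix.mul_assoc (Y * Q21), trace_mul_comm, Matrix.mul_assoc (Yᵀ * P)]
    rw [t1, t2]
    simp only [trace, diag, mul_apply (M := Yᵀ * P * Y), Finset.mul_sum]
  simp only [J, T, integral_const_mul, m1]
  simp only [← he, ← hP, integral_const, probReal_univ, smul_eq_mul, one_mul, mul_zero,
    Finset.sum_const_zero]
  ring
end

section
/- (Theorem 2.2, update form of the predictive covariance.) Q^{(f|1+2)} = Q^{(f|1)} − (K_x2 − K_x1(K_11+Σ_1)⁻¹K_12) · (Q^{(2|1)})⁻¹ · (K_2x − K_21(K_11+Σ_1)⁻¹K_1x). -/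
open Matrix

/-- Theorem 2.2 (update form of the predictive covariance):
`Q^{(f|1+2)} = Q^{(f|1)} − (K_x2 − K_x1(K_11+Σ_1)⁻¹K_12)·(Q^{(2|1)})⁻¹·(K_2x − K_21(K_11+Σ_1)⁻¹K_1x)`. -/
theorem predictive_covariance_update
    {a b c : Type*} [Fintype a] [Fintype b] [Fintype c]
    [DecidableEq a] [DecidableEq b] [DecidableEq c]
    [Nonempty a] [Nonempty b] [Nonempty c]
    (Kxx : Matrix a a ℝ) (Kx1 : Matrix a b ℝ) (Kx2 : Matrix a c ℝ)
    (K11 : Matrix b b ℝ) (K12 : Matrix b c ℝ) (K22 : Matrix c c ℝ)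
    (S1 : Matrix b b ℝ) (S2 : Matrix c c ℝ)
    (h1 : IsUnit (K11 + S1))
    (h2 : IsUnit (K22 + S2 - K12ᵀ * (K11 + S1)⁻¹ * K12)) :
    Kxx - fromCols Kx1 Kx2 * (fromBlocks (K11 + S1) K12 K12ᵀ (K22 + S2))⁻¹
        * fromRows Kx1ᵀ Kx2ᵀ
      = (Kxx - Kx1 * (K11 + S1)⁻¹ * Kx1ᵀ)
        - (Kx2 - Kx1 * (K11 + S1)⁻¹ * K12)
          * (K22 + S2 - K12ᵀ * (K11 + S1)⁻¹ * K12)⁻¹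
          * (Kx2ᵀ - K12ᵀ * (K11 + S1)⁻¹ * Kx1ᵀ) := by
  have key : (fromBlocks (K11 + S1) K12 K12ᵀ (K22 + S2))⁻¹ =
      fromBlocks
        ((K11 + S1)⁻¹ + (K11 + S1)⁻¹ * K12 * (K22 + S2 - K12ᵀ * (K11 + S1)⁻¹ * K12)⁻¹
          * K12ᵀ * (K11 + S1)⁻¹)
        (-((K11 + S1)⁻¹ * K12 * (K22 + S2 - K12ᵀ * (K11 + S1)⁻¹ * K12)⁻¹))
        (-((K22 + S2 - K12ᵀ * (K11 + S1)⁻¹ * K12)⁻¹ * K12ᵀ * (K11 + S1)⁻¹))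
        ((K22 + S2 - K12ᵀ * (K11 + S1)⁻¹ * K12)⁻¹) := by
    letI i1 : Invertible (K11 + S1) := h1.invertible
    rw [← invOf_eq_nonsing_inv (K11 + S1)] at h2 ⊢
    letI i2 : Invertible (K22 + S2 - K12ᵀ * ⅟(K11 + S1) * K12) := h2.invertible
    letI i3 := fromBlocks₁₁Invertible (K11 + S1) K12 K12ᵀ (K22 + S2)
    rw [← invOf_eq_nonsing_inv (K22 + S2 - K12ᵀ * ⅟(K11 + S1) * K12),
      ← invOf_eq_nonsing_inv (fromBlocks _ _ _ _), invOf_fromBlocks₁₁_eq]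
  rw [key]
  generalize (K22 + S2 - K12ᵀ * (K11 + S1)⁻¹ * K12)⁻¹ = Q
  generalize (K11 + S1)⁻¹ = P
  rw [fromCols_mul_fromBlocks, fromCols_mul_fromRows]
  simp only [Matrix.mul_add, Matrix.add_mul, Matrix.mul_sub, Matrix.sub_mul, Matrix.mul_neg,
    Matrix.neg_mul, Matrix.mul_assoc]
  abel
end

section
/- (Noise-free limit theorem.) As ε → 0 from the right, the redundant-data predictive covariance converges to the nonredundant one: the map ε ↦ K_xx − [K_x1 K_x2]·(fromBlocks K_11 K_12 K_21 (K_22 + ε·Σ̄))⁻¹·[K_x1ᵀ; K_x2ᵀ] tends (in the topology of matrices over ℝ, along the filter of positive reals tending to 0) to K_xx − [K_x1 J_x2]·(fromBlocks K_11 L_12 L_12ᵀ J_22)⁻¹·[K_x1ᵀ; J_x2ᵀ]. -/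
open Matrix Filter

lemma nf_aux1 {x m n : Type*} [Fintype x] [Fintype m] [Fintype n] [DecidableEq m] [DecidableEq n]
    (A : Matrix m m ℝ) (B : Matrix m n ℝ) (C : Matrix n m ℝ) (D : Matrix n n ℝ)
    (U : Matrix x m ℝ) (V : Matrix x n ℝ) (Ut : Matrix m x ℝ) (Vt : Matrix n x ℝ)
    (hA : IsUnit A) (hS : IsUnit (D - C * A⁻¹ * B)) :
    fromCols U V * (fromBlocks A B C D)⁻¹ * fromRows Ut Vt
      = U * A⁻¹ * Ut + (V - U * A⁻¹ * B) * (D - C * A⁻¹ * B)⁻¹ * (Vt - C * A⁻¹ * Ut) := by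
  letI := hA.invertible
  have hS' : IsUnit (D - C * ⅟A * B) := by rwa [invOf_eq_nonsing_inv]
  letI := hS'.invertible
  letI := fromBlocks₁₁Invertible A B C D
  rw [← invOf_eq_nonsing_inv (fromBlocks A B C D), invOf_fromBlocks₁₁_eq]
  simp only [invOf_eq_nonsing_inv, fromCols_mul_fromBlocks, fromCols_mul_fromRows]
  simp only [Matrix.mul_add, Matrix.add_mul, Matrix.mul_sub, Matrix.sub_mul, Matrix.mul_neg,
    Matrix.neg_mul, Matrix.mul_assoc]
  abel

lemma nf_aux2 {x m n : Type*} [Fintype x] [Fintype m] [Fintype n] [DecidableEq m] [DecidableEq n]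
    (A : Matrix m m ℝ) (B : Matrix m n ℝ) (C : Matrix n m ℝ) (D : Matrix n n ℝ)
    (U : Matrix x m ℝ) (Ut : Matrix m x ℝ)
    (hD : IsUnit D) (hS : IsUnit (A - B * D⁻¹ * C)) :
    IsUnit (fromBlocks A B C D) ∧
    fromCols U (0 : Matrix x n ℝ) * (fromBlocks A B C D)⁻¹ * fromRows Ut (0 : Matrix n x ℝ)
      = U * (A - B * D⁻¹ * C)⁻¹ * Ut := by
  letI := hD.invertible
  have hS' : IsUnit (A - B * ⅟D * C) := by rwa [invOf_eq_nonsing_inv]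
  refine ⟨isUnit_fromBlocks_iff_of_invertible₂₂.2 hS', ?_⟩
  letI := hS'.invertible
  letI := fromBlocks₂₂Invertible A B C D
  rw [← invOf_eq_nonsing_inv (fromBlocks A B C D), invOf_fromBlocks₂₂_eq]
  simp only [invOf_eq_nonsing_inv, fromCols_mul_fromBlocks, fromCols_mul_fromRows]
  simp

lemma nf_inv_tendsto {n : Type*} [Fintype n] [DecidableEq n] (z C : Matrix n n ℝ) (hz : IsUnit z) :
    Tendsto (fun ε : ℝ => (z + ε • C)⁻¹) (nhds 0) (nhds z⁻¹) ∧
    ∀ᶠ ε : ℝ in nhds 0, IsUnit (z + ε • C) := by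
  have hc : Continuous (fun ε : ℝ => z + ε • C) := by fun_prop
  have hd : z.det ≠ 0 := ((Matrix.isUnit_iff_isUnit_det z).1 hz).ne_zero
  have hdet : Tendsto (fun ε : ℝ => (z + ε • C).det) (nhds 0) (nhds z.det) := by
    simpa using (hc.matrix_det).tendsto (0 : ℝ)
  have hadj : Tendsto (fun ε : ℝ => (z + ε • C).adjugate) (nhds 0) (nhds z.adjugate) := by
    simpa using (hc.matrix_adjugate).tendsto (0 : ℝ)
  constructor
  · simp only [Matrix.inv_def, Ring.inverse_eq_inv']
    exact (hdet.inv₀ hd).smul hadj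
  · filter_upwards [hdet.eventually_ne hd] with ε h
    exact (Matrix.isUnit_iff_isUnit_det _).2 h.isUnit

/-- Noise-free limit theorem: as `ε → 0⁺`, the redundant-data predictive covariance
converges to the nonredundant one. -/
theorem noise_free_limit_predictive_covariance
    {x y1 y2 r : Type*} [Fintype x] [Fintype y1] [Fintype y2] [Fintype r]
    [DecidableEq x] [DecidableEq y1] [DecidableEq y2] [DecidableEq r]
    [Nonempty x] [Nonempty y1] [Nonempty y2] [Nonempty r]
    (J11 : Matrix y1 y1 ℝ) (J1r : Matrix y1 r ℝ) (Jrr : Matrix r r ℝ)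
    (J12 : Matrix y1 y2 ℝ) (Jr2 : Matrix r y2 ℝ) (J22 : Matrix y2 y2 ℝ)
    (Jx1 : Matrix x y1 ℝ) (Jx2 : Matrix x y2 ℝ) (Jxr : Matrix x r ℝ)
    (Kxx : Matrix x x ℝ)
    (hJrr : Jrrᵀ = Jrr)
    (K11 : Matrix (y1 ⊕ r) (y1 ⊕ r) ℝ) (hK11 : K11 = fromBlocks J11 J1r J1rᵀ Jrr)
    (K22 : Matrix (y2 ⊕ r) (y2 ⊕ r) ℝ) (hK22 : K22 = fromBlocks J22 Jr2ᵀ Jr2 Jrr)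
    (K12 : Matrix (y1 ⊕ r) (y2 ⊕ r) ℝ) (hK12 : K12 = fromBlocks J12 J1r Jr2 Jrr)
    (Kx1 : Matrix x (y1 ⊕ r) ℝ) (hKx1 : Kx1 = fromCols Jx1 Jxr)
    (Kx2 : Matrix x (y2 ⊕ r) ℝ) (hKx2 : Kx2 = fromCols Jx2 Jxr)
    (L12 : Matrix (y1 ⊕ r) y2 ℝ) (hL12 : L12 = fromRows J12 Jr2)
    (hK11pd : K11.PosDef)
    (hz : (J22 - L12ᵀ * K11⁻¹ * L12).PosDef)
    (Sb : Matrix (y2 ⊕ r) (y2 ⊕ r) ℝ) (hSb : Sb.PosDef) :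
    Tendsto
      (fun ε : ℝ =>
        Kxx - fromCols Kx1 Kx2 * (fromBlocks K11 K12 K12ᵀ (K22 + ε • Sb))⁻¹
          * fromRows Kx1ᵀ Kx2ᵀ)
      (nhdsWithin 0 (Set.Ioi 0))
      (nhds (Kxx - fromCols Kx1 Jx2 * (fromBlocks K11 L12 L12ᵀ J22)⁻¹
        * fromRows Kx1ᵀ Jx2ᵀ)) := by
  have hA : IsUnit K11 := hK11pd.isUnit
  have hAd := (Matrix.isUnit_iff_isUnit_det _).1 hA
  have hAs : K11ᵀ = K11 := by simpa using hK11pd.1.eq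
  have hAis : K11⁻¹ᵀ = K11⁻¹ := by rw [transpose_nonsing_inv, hAs]
  set E : Matrix (y1 ⊕ r) r ℝ := fromRows 0 1 with hE
  have hK12' : K12 = fromCols L12 (K11 * E) := by
    rw [hK12, hL12, hK11, hE]
    simp only [fromBlocks_mul_fromRows]
    ext (i | i) (j | j) <;> simp
  have hKx2' : Kx2 = fromCols Jx2 (Kx1 * E) := by
    rw [hKx2, hKx1, hE, fromCols_mul_fromRows]; simp
  have hEL : Eᵀ * L12 = Jr2 := by
    rw [hL12, hE, transpose_fromRows, fromCols_mul_fromRows]; simp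
  have hEKE : Eᵀ * K11 * E = Jrr := by
    rw [hK11, hE, transpose_fromRows, fromCols_mul_fromBlocks, fromCols_mul_fromRows]; simp
  have hLE : L12ᵀ * E = Jr2ᵀ := by rw [← hEL]; simp
  set z := J22 - L12ᵀ * K11⁻¹ * L12 with hzdef
  have hzu : IsUnit z := hz.isUnit
  set w := Jx2 - Kx1 * K11⁻¹ * L12 with hw
  have hwT : Jx2ᵀ - L12ᵀ * K11⁻¹ * Kx1ᵀ = wᵀ := by
    rw [hw]; simp [hAis, Matrix.mul_assoc]
  have hlim : fromCols Kx1 Jx2 * (fromBlocks K11 L12 L12ᵀ J22)⁻¹ * fromRows Kx1ᵀ Jx2ᵀ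
      = Kx1 * K11⁻¹ * Kx1ᵀ + w * z⁻¹ * wᵀ := by
    rw [nf_aux1 _ _ _ _ _ _ _ _ hA hzu, hwT]
  have hKiK : K11⁻¹ * (K11 * E) = E := by
    rw [← Matrix.mul_assoc, nonsing_inv_mul _ hAd, Matrix.one_mul]
  have hKK : K11⁻¹ * K12 = fromCols (K11⁻¹ * L12) E := by
    rw [hK12', mul_fromCols, hKiK]
  have hV : Kx2 - Kx1 * K11⁻¹ * K12 = fromCols w 0 := by
    rw [Matrix.mul_assoc, hKK, mul_fromCols, hKx2', hw]
    ext i (j | j) <;> simp [Matrix.mul_assoc]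
  have hV' : Kx2ᵀ - K12ᵀ * K11⁻¹ * Kx1ᵀ = fromRows wᵀ 0 := by
    have := congrArg transpose hV
    simpa [hAis, Matrix.mul_assoc, transpose_fromCols] using this
  have hS0 : K22 - K12ᵀ * K11⁻¹ * K12 = fromBlocks z 0 0 0 := by
    rw [Matrix.mul_assoc, hKK, hK12', transpose_fromCols, fromRows_mul_fromCols, hK22,
      hLE, transpose_mul, hAs, hEKE]
    rw [Matrix.mul_assoc Eᵀ, ← Matrix.mul_assoc K11, mul_nonsing_inv _ hAd, Matrix.one_mul, hEL]
    rw [hzdef]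
    ext (i | i) (j | j) <;> simp [Matrix.mul_assoc]
  have hSu : IsUnit Sb.toBlocks₂₂ := by
    have : Sb.toBlocks₂₂.PosDef := hSb.submatrix (e := Sum.inr) Sum.inr_injective
    exact this.isUnit
  have hSd := (Matrix.isUnit_iff_isUnit_det _).1 hSu
  set C := Sb.toBlocks₁₁ - Sb.toBlocks₁₂ * Sb.toBlocks₂₂⁻¹ * Sb.toBlocks₂₁ with hC
  obtain ⟨ht, hev⟩ := nf_inv_tendsto z C hzu
  rw [hlim]
  refine Tendsto.congr' (f₁ := fun ε : ℝ => Kxx - (Kx1 * K11⁻¹ * Kx1ᵀ + w * (z + ε • C)⁻¹ * wᵀ))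
    ?_ ?_
  · filter_upwards [self_mem_nhdsWithin, nhdsWithin_le_nhds hev] with ε hε hu
    have hε0 : ε ≠ 0 := ne_of_gt hε
    have hS : K22 + ε • Sb - K12ᵀ * K11⁻¹ * K12 = fromBlocks (z + ε • Sb.toBlocks₁₁)
        (ε • Sb.toBlocks₁₂) (ε • Sb.toBlocks₂₁) (ε • Sb.toBlocks₂₂) := by
      rw [add_sub_right_comm, hS0]
      conv_lhs => rw [← fromBlocks_toBlocks Sb]
      rw [fromBlocks_smul, fromBlocks_add]
      simp
    have hinv : (ε • Sb.toBlocks₂₂)⁻¹ = ε⁻¹ • Sb.toBlocks₂₂⁻¹ := by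
      apply inv_eq_right_inv
      simp [smul_smul, hε0, mul_nonsing_inv _ hSd]
    have hD : IsUnit (ε • Sb.toBlocks₂₂) := by
      rw [Matrix.isUnit_iff_isUnit_det, det_smul]
      exact ((isUnit_iff_ne_zero.2 hε0).pow _).mul hSd
    have hSch : z + ε • Sb.toBlocks₁₁ - (ε • Sb.toBlocks₁₂) * (ε • Sb.toBlocks₂₂)⁻¹
        * (ε • Sb.toBlocks₂₁) = z + ε • C := by
      rw [hinv, hC]
      simp [smul_smul, hε0, smul_sub, add_sub_assoc]
    obtain ⟨h1, h2⟩ := nf_aux2 (z + ε • Sb.toBlocks₁₁)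
        (ε • Sb.toBlocks₁₂) (ε • Sb.toBlocks₂₁) (ε • Sb.toBlocks₂₂) w wᵀ hD (by rwa [hSch])
    rw [nf_aux1 _ _ _ _ _ _ _ _ hA (by rwa [hS]), hV, hV', hS, h2, hSch]
  · have hcont : Continuous (fun M : Matrix y2 y2 ℝ =>
        Kxx - (Kx1 * K11⁻¹ * Kx1ᵀ + w * M * wᵀ)) := by fun_prop
    exact (hcont.tendsto _).comp (ht.mono_left nhdsWithin_le_nhds)
end

section
/- (Gaussian prediction update lemma, part (i): mean update.) p^{(f|1+2)} = p^{(f|1)} + (C_f2 − C_f1·C_11⁻¹·C_12) · (Q^{(2|1)})⁻¹ · (g_2 − p^{(2|1)}). -/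
open Matrix

/-- Gaussian prediction update lemma, part (i): mean update.
`p^{(f|1+2)} = p^{(f|1)} + (C_f2 − C_f1·C_11⁻¹·C_12)·(Q^{(2|1)})⁻¹·(g_2 − p^{(2|1)})`. -/
theorem gaussian_prediction_update_mean
    {a b c : Type*} [Fintype a] [Fintype b] [Fintype c]
    [DecidableEq a] [DecidableEq b] [DecidableEq c]
    [Nonempty a] [Nonempty b] [Nonempty c]
    (Cf1 : Matrix a b ℝ) (Cf2 : Matrix a c ℝ)
    (C11 : Matrix b b ℝ) (C12 : Matrix b c ℝ) (C21 : Matrix c b ℝ) (C22 : Matrix c c ℝ)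
    (h1 : IsUnit C11)
    (h2 : IsUnit (C22 - C21 * C11⁻¹ * C12))
    (m : a → ℝ) (m1 g1 : b → ℝ) (m2 g2 : c → ℝ) :
    m + (fromCols Cf1 Cf2 * (fromBlocks C11 C12 C21 C22)⁻¹).mulVec
          (Sum.elim (g1 - m1) (g2 - m2))
      = (m + (Cf1 * C11⁻¹).mulVec (g1 - m1))
        + ((Cf2 - Cf1 * C11⁻¹ * C12) * (C22 - C21 * C11⁻¹ * C12)⁻¹).mulVec
            (g2 - (m2 + (C21 * C11⁻¹).mulVec (g1 - m1))) := by
  have key : (fromBlocks C11 C12 C21 C22)⁻¹ =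
      fromBlocks (C11⁻¹ + C11⁻¹ * C12 * (C22 - C21 * C11⁻¹ * C12)⁻¹ * C21 * C11⁻¹)
        (-(C11⁻¹ * C12 * (C22 - C21 * C11⁻¹ * C12)⁻¹))
        (-((C22 - C21 * C11⁻¹ * C12)⁻¹ * C21 * C11⁻¹)) (C22 - C21 * C11⁻¹ * C12)⁻¹ := by
    letI i1 : Invertible C11 := h1.invertible
    rw [← invOf_eq_nonsing_inv C11] at h2 ⊢
    letI i2 : Invertible (C22 - C21 * ⅟C11 * C12) := h2.invertible
    letI i3 := fromBlocks₁₁Invertible C11 C12 C21 C22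
    rw [← invOf_eq_nonsing_inv (C22 - C21 * ⅟C11 * C12),
      ← invOf_eq_nonsing_inv (fromBlocks C11 C12 C21 C22)]
    exact invOf_fromBlocks₁₁_eq C11 C12 C21 C22
  rw [key]
  generalize (C22 - C21 * C11⁻¹ * C12)⁻¹ = S
  generalize C11⁻¹ = A
  rw [← sub_sub]
  generalize g1 - m1 = u
  generalize g2 - m2 = v
  rw [← mulVec_mulVec, fromBlocks_mulVec, fromCols_mulVec]
  simp only [Sum.elim_comp_inl, Sum.elim_comp_inr, add_mulVec, sub_mulVec, neg_mulVec,
    mulVec_add, mulVec_sub, mulVec_neg, mulVec_mulVec, Matrix.mul_assoc, Matrix.sub_mul]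
  abel
end

section
/- (Gaussian prediction update lemma, part (ii): covariance update.) Q^{(f|1+2)} = Q^{(f|1)} − (C_f2 − C_f1·C_11⁻¹·C_12) · (Q^{(2|1)})⁻¹ · (C_f2ᵀ − C_21·C_11⁻¹·C_f1ᵀ). -/
open Matrix

/-- Gaussian prediction update lemma, part (ii): covariance update.
`Q^{(f|1+2)} = Q^{(f|1)} − (C_f2 − C_f1·C_11⁻¹·C_12)·(Q^{(2|1)})⁻¹·(C_f2ᵀ − C_21·C_11⁻¹·C_f1ᵀ)`. -/
theorem gaussian_prediction_update_covariance
    {a b c : Type*} [Fintype a] [Fintype b] [Fintype c]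
    [DecidableEq a] [DecidableEq b] [DecidableEq c]
    [Nonempty a] [Nonempty b] [Nonempty c]
    (Cff : Matrix a a ℝ) (Cf1 : Matrix a b ℝ) (Cf2 : Matrix a c ℝ)
    (C11 : Matrix b b ℝ) (C12 : Matrix b c ℝ) (C21 : Matrix c b ℝ) (C22 : Matrix c c ℝ)
    (h1 : IsUnit C11)
    (h2 : IsUnit (C22 - C21 * C11⁻¹ * C12)) :
    Cff - fromCols Cf1 Cf2 * (fromBlocks C11 C12 C21 C22)⁻¹ * fromRows Cf1ᵀ Cf2ᵀ
      = (Cff - Cf1 * C11⁻¹ * Cf1ᵀ)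
        - (Cf2 - Cf1 * C11⁻¹ * C12) * (C22 - C21 * C11⁻¹ * C12)⁻¹
          * (Cf2ᵀ - C21 * C11⁻¹ * Cf1ᵀ) := by
  letI i1 : Invertible C11 := h1.invertible
  have e : ⅟C11 = C11⁻¹ := invOf_eq_nonsing_inv C11
  rw [← e] at h2 ⊢
  letI i2 : Invertible (C22 - C21 * ⅟C11 * C12) := h2.invertible
  letI i3 := fromBlocks₁₁Invertible C11 C12 C21 C22
  rw [← invOf_eq_nonsing_inv (C22 - C21 * ⅟C11 * C12),
    ← invOf_eq_nonsing_inv (fromBlocks C11 C12 C21 C22), invOf_fromBlocks₁₁_eq,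
    fromCols_mul_fromBlocks, fromCols_mul_fromRows]
  generalize ⅟(C22 - C21 * ⅟C11 * C12) = S
  generalize ⅟C11 = P
  simp only [Matrix.mul_add, Matrix.add_mul, Matrix.mul_sub, Matrix.sub_mul, Matrix.mul_neg,
    Matrix.neg_mul, Matrix.mul_assoc]
  abel
end

section
/- (First-moment formula for the updated predictive mean.) The expectation of the updated predictive mean under the data-predictive moments equals the old predictive mean: ∫ p^{(f|1+2)}(g₂) dν(g₂) = p^{(f|1)} coordinatewise. -/
open Matrix MeasureTheory

/-- First-moment formula: the expectation of the updated predictive mean under the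
data-predictive moments equals the old predictive mean, `∫ p^{(f|1+2)}(g₂) dν = p^{(f|1)}`
coordinatewise. -/
theorem expected_updated_predictive_mean
    {a b c : Type*} [Fintype a] [Fintype b] [Fintype c]
    [DecidableEq a] [DecidableEq b] [DecidableEq c]
    [Nonempty a] [Nonempty b] [Nonempty c]
    (Kx1 : Matrix a b ℝ) (Kx2 : Matrix a c ℝ)
    (K11 : Matrix b b ℝ) (K12 : Matrix b c ℝ) (K22 : Matrix c c ℝ)
    (S1 : Matrix b b ℝ) (S2 : Matrix c c ℝ)
    (h1 : IsUnit (K11 + S1))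
    (h2 : IsUnit (K22 + S2 - K12ᵀ * (K11 + S1)⁻¹ * K12))
    (Γ : Matrix (b ⊕ c) (b ⊕ c) ℝ)
    (hΓ : Γ = fromBlocks (K11 + S1) K12 K12ᵀ (K22 + S2))
    (μx : a → ℝ) (μ1 : b → ℝ) (μ2 : c → ℝ) (g1 : b → ℝ)
    (pf1 : a → ℝ)
    (hpf1 : pf1 = μx + (Kx1 * (K11 + S1)⁻¹).mulVec (g1 - μ1))
    (p21 : c → ℝ)
    (hp21 : p21 = μ2 + (K12ᵀ * (K11 + S1)⁻¹).mulVec (g1 - μ1))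
    (pf12 : (c → ℝ) → (a → ℝ))
    (hpf12 : ∀ g2, pf12 g2
      = μx + (fromCols Kx1 Kx2 * Γ⁻¹).mulVec (Sum.elim (g1 - μ1) (g2 - μ2)))
    (ν : Measure (c → ℝ)) [IsProbabilityMeasure ν]
    (hint1 : ∀ i, Integrable (fun g2 => g2 i) ν)
    (hmean : ∀ i, ∫ g2, g2 i ∂ν = p21 i) :
    ∀ j, ∫ g2, pf12 g2 j ∂ν = pf1 j := by
  intro j
  have hu : IsUnit Γ := by
    let := h1.invertible
    rw [hΓ, isUnit_fromBlocks_iff_of_invertible₁₁, invOf_eq_nonsing_inv]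
    exact h2
  have hd1 : IsUnit (K11 + S1).det := (Matrix.isUnit_iff_isUnit_det _).1 h1
  have hdΓ : IsUnit Γ.det := (Matrix.isUnit_iff_isUnit_det _).1 hu
  -- the integral commutes with the affine map
  have key : ∫ g2, pf12 g2 j ∂ν = pf12 p21 j := by
    simp only [hpf12, Pi.add_apply, mulVec, dotProduct, Fintype.sum_sum_type, Sum.elim_inl,
      Sum.elim_inr, Pi.sub_apply]
    have hi : ∀ i ∈ Finset.univ, Integrable (fun g2 : c → ℝ =>
        (fromCols Kx1 Kx2 * Γ⁻¹) j (Sum.inr i) * (g2 i - μ2 i)) ν := fun i _ =>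
      ((hint1 i).sub (integrable_const _)).const_mul _
    have hs := integrable_finsetSum _ hi
    simp only [← add_assoc]
    rw [integral_add (integrable_const _) hs, integral_finsetSum _ hi]
    simp only [integral_const_mul, integral_const, probReal_univ, one_smul]
    congr 1
    refine Finset.sum_congr rfl fun i _ => ?_
    rw [integral_sub (hint1 i) (integrable_const _), hmean i]
    simp
  have hv : Sum.elim (g1 - μ1) (p21 - μ2)
      = Γ *ᵥ (Sum.elim ((K11 + S1)⁻¹ *ᵥ (g1 - μ1)) 0) := by
    rw [hΓ, fromBlocks_mulVec, hp21]
    simp only [Sum.elim_comp_inl, Sum.elim_comp_inr, mulVec_zero, add_zero, mulVec_mulVec,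
      Matrix.mul_nonsing_inv _ hd1, one_mulVec, add_sub_cancel_left]
  rw [key, hpf12, hv, mulVec_mulVec, Matrix.mul_assoc, Matrix.nonsing_inv_mul _ hdΓ,
    Matrix.mul_one, fromCols_mulVec, hpf1]
  simp only [Sum.elim_comp_inl, Sum.elim_comp_inr, mulVec_zero, add_zero, mulVec_mulVec]
end

section
/- (Second-moment formula for the updated predictive mean.) The fluctuation covariance of the updated predictive mean under the data-predictive moments is ∫ (p^{(f|1+2)}(g₂) − p^{(f|1)})(p^{(f|1+2)}(g₂) − p^{(f|1)})ᵀ dν(g₂) = A · (Q^{(2|1)})⁻¹ · Aᵀ entrywise, where A := K_x2 − K_x1(K_11+Σ_1)⁻¹K_12. -/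
open Matrix MeasureTheory

/-- Second-moment formula: the fluctuation covariance of the updated predictive mean
under the data-predictive moments is
`∫ (p^{(f|1+2)}(g₂) − p^{(f|1)})(p^{(f|1+2)}(g₂) − p^{(f|1)})ᵀ dν = A·(Q^{(2|1)})⁻¹·Aᵀ`
entrywise, where `A := K_x2 − K_x1(K_11+Σ_1)⁻¹K_12`. -/
theorem second_moment_updated_predictive_mean
    {a b c : Type*} [Fintype a] [Fintype b] [Fintype c]
    [DecidableEq a] [DecidableEq b] [DecidableEq c]
    [Nonempty a] [Nonempty b] [Nonempty c]
    (Kx1 : Matrix a b ℝ) (Kx2 : Matrix a c ℝ)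
    (K11 : Matrix b b ℝ) (K12 : Matrix b c ℝ) (K22 : Matrix c c ℝ)
    (S1 : Matrix b b ℝ) (S2 : Matrix c c ℝ)
    (h1 : IsUnit (K11 + S1))
    (Q21 : Matrix c c ℝ)
    (hQ21 : Q21 = K22 + S2 - K12ᵀ * (K11 + S1)⁻¹ * K12)
    (h2 : IsUnit Q21)
    (Γ : Matrix (b ⊕ c) (b ⊕ c) ℝ)
    (hΓ : Γ = fromBlocks (K11 + S1) K12 K12ᵀ (K22 + S2))
    (μx : a → ℝ) (μ1 : b → ℝ) (μ2 : c → ℝ) (g1 : b → ℝ)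
    (pf1 : a → ℝ)
    (hpf1 : pf1 = μx + (Kx1 * (K11 + S1)⁻¹).mulVec (g1 - μ1))
    (p21 : c → ℝ)
    (hp21 : p21 = μ2 + (K12ᵀ * (K11 + S1)⁻¹).mulVec (g1 - μ1))
    (pf12 : (c → ℝ) → (a → ℝ))
    (hpf12 : ∀ g2, pf12 g2
      = μx + (fromCols Kx1 Kx2 * Γ⁻¹).mulVec (Sum.elim (g1 - μ1) (g2 - μ2)))
    (A : Matrix a c ℝ)
    (hA : A = Kx2 - Kx1 * (K11 + S1)⁻¹ * K12)
    (ν : Measure (c → ℝ)) [IsProbabilityMeasure ν]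
    (hint1 : ∀ i, Integrable (fun g2 => g2 i) ν)
    (hint2 : ∀ i j, Integrable (fun g2 => g2 i * g2 j) ν)
    (hmean : ∀ i, ∫ g2, g2 i ∂ν = p21 i)
    (hcov : ∀ i j, ∫ g2, (g2 i - p21 i) * (g2 j - p21 j) ∂ν = Q21 i j) :
    ∀ i j, ∫ g2, (pf12 g2 i - pf1 i) * (pf12 g2 j - pf1 j) ∂ν
      = (A * Q21⁻¹ * Aᵀ) i j := by
  intro i j
  have d1 : IsUnit (K11 + S1).det := (Matrix.isUnit_iff_isUnit_det _).1 h1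
  have d2 : IsUnit Q21.det := (Matrix.isUnit_iff_isUnit_det _).1 h2
  have hsym : Q21ᵀ = Q21 := by
    ext k l
    rw [Matrix.transpose_apply, ← hcov, ← hcov]
    simp_rw [mul_comm]
  obtain ⟨B, hB⟩ : ∃ B, B = A * Q21⁻¹ := ⟨_, rfl⟩
  have hBQ : B * Q21 = A := by
    rw [hB, Matrix.mul_assoc, Matrix.nonsing_inv_mul _ d2, Matrix.mul_one]
  have hΓu : IsUnit Γ.det := by
    have : Invertible (K11 + S1) := Matrix.invertibleOfIsUnitDet _ d1
    rw [hΓ, Matrix.det_fromBlocks₁₁, Matrix.invOf_eq_nonsing_inv, ← hQ21]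
    exact d1.mul d2
  have hrow : fromCols Kx1 Kx2 * Γ⁻¹ = fromCols ((Kx1 - B * K12ᵀ) * (K11 + S1)⁻¹) B := by
    have h : fromCols Kx1 Kx2 = fromCols ((Kx1 - B * K12ᵀ) * (K11 + S1)⁻¹) B * Γ := by
      rw [hΓ, Matrix.fromCols_mul_fromBlocks]
      congr 1
      · rw [Matrix.mul_assoc, Matrix.nonsing_inv_mul _ d1, Matrix.mul_one, sub_add_cancel]
      · have h3 : B * (K22 + S2) = A + B * (K12ᵀ * (K11 + S1)⁻¹ * K12) := by
          rw [← hBQ, hQ21, ← Matrix.mul_add, sub_add_cancel]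
        rw [h3, hA]
        simp only [Matrix.sub_mul, Matrix.mul_assoc]
        abel
    rw [h, Matrix.mul_assoc, Matrix.mul_nonsing_inv _ hΓu, Matrix.mul_one]
  have hdiff : ∀ g2 k, pf12 g2 k - pf1 k = ∑ l, B k l * (g2 l - p21 l) := by
    intro g2 k
    have h : pf12 g2 - pf1 = B.mulVec (g2 - p21) := by
      rw [hpf12, hpf1, hp21, hrow, Matrix.fromCols_mulVec_sumElim]
      simp only [Matrix.sub_mul, Matrix.sub_mulVec, Matrix.mulVec_sub, Matrix.mulVec_add,
        Matrix.mulVec_mulVec, Matrix.mul_assoc]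
      abel
    exact congrFun h k
  have hI : ∀ k l, Integrable (fun g2 : c → ℝ => (g2 k - p21 k) * (g2 l - p21 l)) ν := by
    intro k l
    have h := (((hint2 k l).sub ((hint1 k).mul_const (p21 l))).sub
      ((hint1 l).const_mul (p21 k))).add (integrable_const (p21 k * p21 l))
    refine h.congr (Filter.Eventually.of_forall fun g2 => ?_)
    simp only [Pi.add_apply, Pi.sub_apply]
    ring
  have hfin : A * Q21⁻¹ * Aᵀ = B * Q21 * Bᵀ := by
    rw [← hB]
    conv_lhs => rw [← hBQ]
    rw [Matrix.transpose_mul, hsym, Matrix.mul_assoc]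
  have hexp : ∀ g2 : c → ℝ, (pf12 g2 i - pf1 i) * (pf12 g2 j - pf1 j)
      = ∑ k, ∑ l, B i k * B j l * ((g2 k - p21 k) * (g2 l - p21 l)) := by
    intro g2
    rw [hdiff, hdiff, Finset.sum_mul_sum]
    refine Finset.sum_congr rfl fun k _ => Finset.sum_congr rfl fun l _ => ?_
    ring
  simp_rw [hexp]
  rw [integral_finsetSum _ fun k _ => integrable_finsetSum _ fun l _ => (hI k l).const_mul _]
  simp_rw [integral_finsetSum _ fun l _ => (hI _ l).const_mul _, integral_const_mul, hcov]
  rw [hfin, Matrix.mul_assoc, Matrix.mul_apply]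
  refine Finset.sum_congr rfl fun k _ => ?_
  rw [Matrix.mul_apply, Finset.mul_sum]
  refine Finset.sum_congr rfl fun l _ => ?_
  rw [Matrix.transpose_apply]
  ring
end

section
/- (Cross-covariance correction with redundant points, eq. otherterm.) If K_11 is invertible, then K_x2 − K_x1·K_11⁻¹·K_12 = [q, 0], i.e., the x×(y2⊕r) matrix whose y2 block-column is q and whose r block-column is zero. -/
open Matrix

/-- Cross-covariance correction with redundant points (eq. otherterm): if `K_11` is
invertible, then `K_x2 − K_x1·K_11⁻¹·K_12 = [q, 0]`, with
`q := J_x2 − K_x1·K_11⁻¹·L_12`. -/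
theorem cross_covariance_redundant_points
    {x y1 y2 r : Type*} [Fintype x] [Fintype y1] [Fintype y2] [Fintype r]
    [DecidableEq x] [DecidableEq y1] [DecidableEq y2] [DecidableEq r]
    [Nonempty x] [Nonempty y1] [Nonempty y2] [Nonempty r]
    (J11 : Matrix y1 y1 ℝ) (J1r : Matrix y1 r ℝ) (Jrr : Matrix r r ℝ)
    (J12 : Matrix y1 y2 ℝ) (Jr2 : Matrix r y2 ℝ)
    (Jx1 : Matrix x y1 ℝ) (Jx2 : Matrix x y2 ℝ) (Jxr : Matrix x r ℝ)
    (hK11 : IsUnit (fromBlocks J11 J1r J1rᵀ Jrr)) :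
    fromCols Jx2 Jxr
      - fromCols Jx1 Jxr * (fromBlocks J11 J1r J1rᵀ Jrr)⁻¹
        * fromBlocks J12 J1r Jr2 Jrr
      = fromCols
          (Jx2 - fromCols Jx1 Jxr * (fromBlocks J11 J1r J1rᵀ Jrr)⁻¹ * fromRows J12 Jr2)
          0 := by
  have hdet := (isUnit_iff_isUnit_det _).mp hK11
  have hR : fromRows J1r Jrr
      = fromBlocks J11 J1r J1rᵀ Jrr * fromRows (0 : Matrix y1 r ℝ) (1 : Matrix r r ℝ) := by
    rw [fromBlocks_mul_fromRows]
    simp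
  have hcol : fromCols Jx1 Jxr * (fromBlocks J11 J1r J1rᵀ Jrr)⁻¹ * fromRows J1r Jrr = Jxr := by
    rw [hR, Matrix.mul_assoc, nonsing_inv_mul_cancel_left _ _ hdet, fromCols_mul_fromRows]
    simp
  have hB : fromBlocks J12 J1r Jr2 Jrr = fromCols (fromRows J12 Jr2) (fromRows J1r Jrr) := by
    ext (i | i) (j | j) <;> rfl
  rw [hB, mul_fromCols, hcol]
  ext i (j | j) <;> simp
end

section
/- (Convergence of the information-correction term in the zero-noise limit, eq. T_and_Tprime.) The map ε ↦ (K_x2 − K_x1·K_11⁻¹·K_12) · (K_22 + ε·Σ̄ − K_21·K_11⁻¹·K_12)⁻¹ · (K_x2ᵀ − K_21·K_11⁻¹·K_x1ᵀ) tends, as ε → 0 along positive reals, to q·z⁻¹·qᵀ. -/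
open Matrix Filter

set_option maxHeartbeats 2000000 in
/-- Convergence of the information-correction term in the zero-noise limit
(eq. T_and_Tprime): as `ε → 0⁺`,
`(K_x2 − K_x1·K_11⁻¹·K_12)·(K_22 + ε·Σ̄ − K_21·K_11⁻¹·K_12)⁻¹·(K_x2ᵀ − K_21·K_11⁻¹·K_x1ᵀ)`
tends to `q·z⁻¹·qᵀ`. -/
theorem correction_term_zero_noise_limit
    {x y1 y2 r : Type*} [Fintype x] [Fintype y1] [Fintype y2] [Fintype r]
    [DecidableEq x] [DecidableEq y1] [DecidableEq y2] [DecidableEq r]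
    [Nonempty x] [Nonempty y1] [Nonempty y2] [Nonempty r]
    (J11 : Matrix y1 y1 ℝ) (J1r : Matrix y1 r ℝ) (Jrr : Matrix r r ℝ)
    (J12 : Matrix y1 y2 ℝ) (Jr2 : Matrix r y2 ℝ) (J22 : Matrix y2 y2 ℝ)
    (Jx1 : Matrix x y1 ℝ) (Jx2 : Matrix x y2 ℝ) (Jxr : Matrix x r ℝ)
    (hJrr : Jrrᵀ = Jrr)
    (K11 : Matrix (y1 ⊕ r) (y1 ⊕ r) ℝ) (hK11 : K11 = fromBlocks J11 J1r J1rᵀ Jrr)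
    (K22 : Matrix (y2 ⊕ r) (y2 ⊕ r) ℝ) (hK22 : K22 = fromBlocks J22 Jr2ᵀ Jr2 Jrr)
    (K12 : Matrix (y1 ⊕ r) (y2 ⊕ r) ℝ) (hK12 : K12 = fromBlocks J12 J1r Jr2 Jrr)
    (Kx1 : Matrix x (y1 ⊕ r) ℝ) (hKx1 : Kx1 = fromCols Jx1 Jxr)
    (Kx2 : Matrix x (y2 ⊕ r) ℝ) (hKx2 : Kx2 = fromCols Jx2 Jxr)
    (L12 : Matrix (y1 ⊕ r) y2 ℝ) (hL12 : L12 = fromRows J12 Jr2)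
    (z : Matrix y2 y2 ℝ) (hz : z = J22 - L12ᵀ * K11⁻¹ * L12)
    (q : Matrix x y2 ℝ) (hq : q = Jx2 - Kx1 * K11⁻¹ * L12)
    (hK11pd : K11.PosDef) (hzpd : z.PosDef)
    (Sb : Matrix (y2 ⊕ r) (y2 ⊕ r) ℝ) (hSb : Sb.PosDef) :
    Tendsto
      (fun ε : ℝ =>
        (Kx2 - Kx1 * K11⁻¹ * K12)
          * (K22 + ε • Sb - K12ᵀ * K11⁻¹ * K12)⁻¹
          * (Kx2ᵀ - K12ᵀ * K11⁻¹ * Kx1ᵀ))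
      (nhdsWithin 0 (Set.Ioi 0))
      (nhds (q * z⁻¹ * qᵀ)) := by
  have hu : IsUnit K11.det := (Matrix.isUnit_iff_isUnit_det _).1 hK11pd.isUnit
  have hT : K11ᵀ = K11 := by simpa [Matrix.IsHermitian] using hK11pd.isHermitian
  -- the selector of the redundant block
  obtain ⟨E, hE⟩ : ∃ E : Matrix (y1 ⊕ r) r ℝ, E = fromRows 0 1 := ⟨_, rfl⟩
  have hKE : fromRows J1r Jrr = K11 * E := by
    rw [hK11, hE]
    simp [fromBlocks_mul_fromRows]
  have hK12' : K12 = fromCols L12 (K11 * E) := by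
    rw [← hKE, hK12, hL12]
    ext (i | i) (j | j) <;> rfl
  have hxE : Kx1 * E = Jxr := by
    rw [hKx1, hE, fromCols_mul_fromRows]; simp
  have hLE : L12ᵀ * E = Jr2ᵀ := by
    rw [hL12, hE, transpose_fromRows, fromCols_mul_fromRows]; simp
  have hEL : Eᵀ * L12 = Jr2 := by
    have := congrArg transpose hLE
    simpa using this
  have hEKE : Eᵀ * (K11 * E) = Jrr := by
    rw [← hKE, hE, transpose_fromRows, fromCols_mul_fromRows]; simp
  have hinvK12 : K11⁻¹ * K12 = fromCols (K11⁻¹ * L12) E := by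
    rw [hK12', mul_fromCols, Matrix.nonsing_inv_mul_cancel_left _ _ hu]
  have hleft : Kx2 - Kx1 * K11⁻¹ * K12 = fromCols q 0 := by
    rw [Matrix.mul_assoc, hinvK12, mul_fromCols, hxE, hKx2, hq, Matrix.mul_assoc]
    ext i (j | j) <;> simp
  have hright : Kx2ᵀ - K12ᵀ * K11⁻¹ * Kx1ᵀ = fromRows qᵀ 0 := by
    have := congrArg transpose hleft
    rw [transpose_fromCols] at this
    simpa [Matrix.transpose_mul, Matrix.transpose_nonsing_inv, hT, Matrix.mul_assoc] using this
  have hmid : K22 - K12ᵀ * K11⁻¹ * K12 = fromBlocks z 0 0 0 := by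
    rw [Matrix.mul_assoc, hinvK12, hK12', transpose_fromCols, fromRows_mul_fromCols,
      Matrix.transpose_mul, hT, Matrix.mul_assoc Eᵀ, Matrix.mul_nonsing_inv_cancel_left _ _ hu,
      Matrix.mul_assoc Eᵀ, hEKE, hEL, hLE, hK22, hz, Matrix.mul_assoc]
    ext (i | i) (j | j) <;> simp
  obtain ⟨A, hA⟩ : ∃ A, A = Sb.toBlocks₁₁ := ⟨_, rfl⟩
  obtain ⟨B, hB⟩ : ∃ A, A = Sb.toBlocks₁₂ := ⟨_, rfl⟩
  obtain ⟨C, hC⟩ : ∃ A, A = Sb.toBlocks₂₁ := ⟨_, rfl⟩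
  obtain ⟨D, hD⟩ : ∃ A, A = Sb.toBlocks₂₂ := ⟨_, rfl⟩
  have hS : Sb = fromBlocks A B C D := by
    rw [hA, hB, hC, hD, fromBlocks_toBlocks]
  have hDpd : D.PosDef := by
    rw [hD]; exact hSb.submatrix Sum.inr_injective
  have hDu : IsUnit D.det := (Matrix.isUnit_iff_isUnit_det _).1 hDpd.isUnit
  have hzu : IsUnit z.det := (Matrix.isUnit_iff_isUnit_det _).1 hzpd.isUnit
  have hcont : Continuous (fun ε : ℝ => z + ε • (A - B * D⁻¹ * C)) := by fun_prop
  have hdet : ∀ᶠ ε : ℝ in nhds 0, (z + ε • (A - B * D⁻¹ * C)).det ≠ 0 := by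
    apply (hcont.matrix_det).continuousAt.eventually_ne
    simpa using hzu.ne_zero
  have hlim : Tendsto (fun ε : ℝ => q * (z + ε • (A - B * D⁻¹ * C))⁻¹ * qᵀ)
      (nhdsWithin 0 (Set.Ioi 0)) (nhds (q * z⁻¹ * qᵀ)) := by
    have h1 : ContinuousAt (fun ε : ℝ => (z + ε • (A - B * D⁻¹ * C))⁻¹) 0 := by
      have hz0 : z + (0 : ℝ) • (A - B * D⁻¹ * C) = z := by rw [zero_smul, add_zero]
      have hi : ContinuousAt (Inv.inv : Matrix y2 y2 ℝ → Matrix y2 y2 ℝ)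
          (z + (0 : ℝ) • (A - B * D⁻¹ * C)) := by
        rw [hz0]
        refine continuousAt_matrix_inv z ?_
        rw [Ring.inverse_eq_inv']
        exact continuousAt_inv₀ hzu.ne_zero
      exact ContinuousAt.comp (f := fun ε : ℝ => z + ε • (A - B * D⁻¹ * C)) hi hcont.continuousAt
    have h2 : ContinuousAt (fun ε : ℝ => q * (z + ε • (A - B * D⁻¹ * C))⁻¹ * qᵀ) 0 := by
      have hc : Continuous (fun M : Matrix y2 y2 ℝ => q * M * qᵀ) := by fun_prop
      exact hc.continuousAt.comp h1
    have h3 := h2.tendsto.mono_left (nhdsWithin_le_nhds (s := Set.Ioi (0:ℝ)))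
    simpa using h3
  refine hlim.congr' ?_
  filter_upwards [hdet.filter_mono nhdsWithin_le_nhds, self_mem_nhdsWithin] with ε hε hpos
  have hε0 : ε ≠ 0 := (Set.mem_Ioi.1 hpos).ne'
  obtain ⟨s, hs⟩ : ∃ s, s = z + ε • (A - B * D⁻¹ * C) := ⟨_, rfl⟩
  rw [← hs] at hε ⊢
  have hsu : IsUnit s.det := isUnit_iff_ne_zero.2 hε
  obtain ⟨M, hM⟩ : ∃ M, M = K22 + ε • Sb - K12ᵀ * K11⁻¹ * K12 := ⟨_, rfl⟩
  have hM' : M = fromBlocks (z + ε • A) (ε • B) (ε • C) (ε • D) := by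
    rw [hM, add_sub_right_comm, hmid, hS, fromBlocks_smul, fromBlocks_add]; simp
  -- block elimination
  have hfac : M * fromBlocks 1 0 (-(D⁻¹ * C)) 1 = fromBlocks s (ε • B) 0 (ε • D) := by
    rw [hM', fromBlocks_multiply, hs]
    congr 1
    · simp [Matrix.mul_assoc, sub_eq_add_neg, add_assoc]
    · simp
    · simp [Matrix.mul_nonsing_inv_cancel_left _ _ hDu]
    · simp
  have hMu : IsUnit M.det := by
    have h := congrArg det hfac
    rw [det_mul, det_fromBlocks_zero₁₂, det_fromBlocks_zero₂₁] at h
    simp only [det_one, mul_one, det_smul] at h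
    rw [h]
    exact hsu.mul (((isUnit_iff_ne_zero.2 hε0).pow _).mul hDu)
  have hsol : M * fromRows (s⁻¹ * qᵀ) (-(D⁻¹ * C) * (s⁻¹ * qᵀ)) = fromRows qᵀ 0 := by
    have h : fromRows (s⁻¹ * qᵀ) (-(D⁻¹ * C) * (s⁻¹ * qᵀ))
        = fromBlocks 1 0 (-(D⁻¹ * C)) (1 : Matrix r r ℝ) *
          (fromRows (s⁻¹ * qᵀ) (0 : Matrix r x ℝ) : Matrix (y2 ⊕ r) x ℝ) := by
      rw [fromBlocks_mul_fromRows]; simp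
    rw [h, ← Matrix.mul_assoc, hfac, fromBlocks_mul_fromRows,
      Matrix.mul_nonsing_inv_cancel_left _ _ hsu]
    simp
  rw [← hM, hleft, hright, Matrix.mul_assoc, Matrix.mul_assoc, ← hsol,
    Matrix.nonsing_inv_mul_cancel_left _ _ hMu, fromCols_mul_fromRows]
  simp
end

section
/- (Zero-noise concentration of the regularized inverse.) For every ε > 0 the matrix ε·Σ̄ + Pᵀ·z·P is positive definite, and the map ε ↦ P·(ε·Σ̄ + Pᵀ·z·P)⁻¹·Pᵀ tends, as ε → 0 along positive reals, to z⁻¹. -/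
open Matrix Filter

/-- Zero-noise concentration of the regularized inverse: for every `ε > 0` the matrix
`ε·Σ̄ + Pᵀ·z·P` is positive definite, and `P·(ε·Σ̄ + Pᵀ·z·P)⁻¹·Pᵀ → z⁻¹` as `ε → 0⁺`,
where `P = [1, 0]`. -/
theorem zero_noise_concentration_regularized_inverse
    {c r : Type*} [Fintype c] [Fintype r] [DecidableEq c] [DecidableEq r]
    [Nonempty c] [Nonempty r]
    (z : Matrix c c ℝ) (hz : z.PosDef)
    (Sb : Matrix (c ⊕ r) (c ⊕ r) ℝ) (hSb : Sb.PosDef)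
    (P : Matrix c (c ⊕ r) ℝ) (hP : P = fromCols (1 : Matrix c c ℝ) (0 : Matrix c r ℝ)) :
    (∀ ε : ℝ, 0 < ε → (ε • Sb + Pᵀ * z * P).PosDef) ∧
      Tendsto (fun ε : ℝ => P * (ε • Sb + Pᵀ * z * P)⁻¹ * Pᵀ)
        (nhdsWithin 0 (Set.Ioi 0)) (nhds z⁻¹) := by
  have hM : ∀ ε : ℝ, 0 < ε → (ε • Sb + Pᵀ * z * P).PosDef := by
    intro ε hε
    refine (hSb.smul hε).add_posSemidef ?_
    have := hz.posSemidef.conjTranspose_mul_mul_same P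
    simpa [conjTranspose_eq_transpose_of_trivial] using this
  refine ⟨hM, ?_⟩
  have hK : (P * Sb⁻¹ * Pᵀ).PosDef := by
    have h1 := hSb.inv.submatrix (e := (Sum.inl : c → c ⊕ r)) Sum.inl_injective
    have h2 : P * Sb⁻¹ * Pᵀ = Sb⁻¹.submatrix Sum.inl Sum.inl := by
      ext i j
      simp [hP, Matrix.mul_apply, Matrix.one_apply]
    rw [h2]
    exact h1
  set K := P * Sb⁻¹ * Pᵀ with hKdef
  have hSu : IsUnit Sb.det := (Matrix.isUnit_iff_isUnit_det _).1 hSb.isUnit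
  have hKu : IsUnit K.det := (Matrix.isUnit_iff_isUnit_det _).1 hK.isUnit
  have key : ∀ ε : ℝ, 0 < ε →
      (ε • K⁻¹ + z)⁻¹ = P * (ε • Sb + Pᵀ * z * P)⁻¹ * Pᵀ := by
    intro ε hε
    have hMu : IsUnit (ε • Sb + Pᵀ * z * P).det :=
      (Matrix.isUnit_iff_isUnit_det _).1 (hM ε hε).isUnit
    set M := ε • Sb + Pᵀ * z * P with hMdef
    have e1 : M * (Sb⁻¹ * Pᵀ) = Pᵀ * (ε • (1 : Matrix c c ℝ) + z * K) := by
      rw [hMdef, Matrix.add_mul, Matrix.mul_add, Matrix.smul_mul,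
        Matrix.mul_nonsing_inv_cancel_left _ _ hSu, hKdef]
      simp [Matrix.mul_assoc]
    have e2 : K = P * M⁻¹ * Pᵀ * (ε • (1 : Matrix c c ℝ) + z * K) := by
      rw [Matrix.mul_assoc (P * M⁻¹), ← e1, Matrix.mul_assoc P,
        Matrix.nonsing_inv_mul_cancel_left _ _ hMu, hKdef, Matrix.mul_assoc]
    apply Matrix.inv_eq_left_inv
    have e3 : ε • K⁻¹ + z = (ε • (1 : Matrix c c ℝ) + z * K) * K⁻¹ := by
      rw [Matrix.add_mul, Matrix.mul_nonsing_inv_cancel_right _ _ hKu]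
      simp
    rw [e3, ← Matrix.mul_assoc, ← e2, Matrix.mul_nonsing_inv _ hKu]
  have hzd : z.det ≠ 0 := hz.det_pos.ne'
  have hc : ContinuousAt (fun ε : ℝ => (ε • K⁻¹ + z)⁻¹) 0 := by
    have hc0 : Continuous (fun ε : ℝ => ε • K⁻¹ + z) := by fun_prop
    have hfun : (fun ε : ℝ => (ε • K⁻¹ + z)⁻¹) =
        fun ε : ℝ => ((ε • K⁻¹ + z).det)⁻¹ • (ε • K⁻¹ + z).adjugate := by
      funext ε
      rw [Matrix.inv_def, Ring.inverse_eq_inv']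
    have hc1 : ContinuousAt (fun ε : ℝ => ((ε • K⁻¹ + z).det)⁻¹ • (ε • K⁻¹ + z).adjugate) 0 := by
      refine ContinuousAt.smul (ContinuousAt.inv₀ hc0.matrix_det.continuousAt ?_)
        hc0.matrix_adjugate.continuousAt
      simpa using hzd
    rw [hfun]
    exact hc1
  have ht := hc.tendsto
  simp only [zero_smul, zero_add] at ht
  refine (ht.mono_left nhdsWithin_le_nhds).congr' ?_
  filter_upwards [self_mem_nhdsWithin] with ε hε
  exact key ε hε
end
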